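/- arXiv:1104.2639 — 2 statements merged into one kernel-verified Lean document; each statement's English description precedes it below -/
import Mathlib

section
/- Let X be a metric space, K ⊆ ℝ^X a compact space (with the pointwise topology), and μ a Radon probability measure on K. Then for any ε, δ > 0 the set X₀ = {x ∈ X : μ({g ∈ K : osc(g, x) ≥ δ}) ≥ ε} is closed in X. -/
open MeasureTheory Set

/-- `osc g Y x` is the oscillation at `x` of the restriction of `g : X → ℝ` to `Y ⊆ X`:
the infimum, over open neighbourhoods `U` of `x`, of the diameter of `g '' (U ∩ Y)`.
The full oscillation of `g` at `x` is `osc g Set.univ x`. -/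
noncomputable def osc {X : Type*} [TopologicalSpace X] (g : X → ℝ) (Y : Set X) (x : X) :
    ENNReal :=
  ⨅ (U : Set X) (_ : IsOpen U) (_ : x ∈ U), EMetric.diam (g '' (U ∩ Y))

/-!
If `V n` is a decreasing neighbourhood basis at `x` and `u n` increases strictly to `δ > 0`, then
`{g | δ ≤ osc g x}` is the decreasing intersection of the sets `{g | u n < diam (g '' V n)}`, which
are open for pointwise convergence, so its measure is the limit of theirs. For `y` near `x`, the
set `V n` is a neighbourhood of `y` as well, so `{g | δ ≤ osc g y}` lies in the `n`-th of these
sets. Hence `x ↦ μ {g | δ ≤ osc g x}` is upper semicontinuous.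
-/

open Filter Topology

theorem lowerSemicontinuous_ediam_image {Ω X E : Type*} [TopologicalSpace Ω]
    [PseudoEMetricSpace E] {f : Ω → X → E} (hf : Continuous f) (s : Set X) :
    LowerSemicontinuous fun ω => Metric.ediam (f ω '' s) := by
  simp only [Metric.ediam, iSup_image]
  refine lowerSemicontinuous_biSup fun x _ => lowerSemicontinuous_biSup fun y _ => ?_
  exact (((continuous_apply x).comp hf).edist ((continuous_apply y).comp hf)).lowerSemicontinuous

theorem monotone_ediam_image_inter {X E : Type*} [PseudoEMetricSpace E] (g : X → E)
    (Y : Set X) :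
    Monotone fun s => Metric.ediam (g '' (s ∩ Y)) :=
  fun _ _ hst => Metric.ediam_mono (image_mono (inter_subset_inter_left Y hst))

section Oscillation

variable {X : Type*} [TopologicalSpace X]

theorem osc_eq_iInf_mem_nhds (g : X → ℝ) (Y : Set X) (x : X) :
    osc g Y x = ⨅ s ∈ 𝓝 x, Metric.ediam (g '' (s ∩ Y)) := by
  rw [(nhds_basis_opens x).biInf_mem (monotone_ediam_image_inter g Y)]
  simp only [iInf_and]
  exact iInf_congr fun U => iInf_comm

theorem osc_le_ediam_image (g : X → ℝ) (Y : Set X) {x : X} {s : Set X} (hs : s ∈ 𝓝 x) :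
    osc g Y x ≤ Metric.ediam (g '' (s ∩ Y)) :=
  (osc_eq_iInf_mem_nhds g Y x).trans_le (biInf_le _ hs)

theorem le_osc_iff_forall_lt_ediam_image (g : X → ℝ) (Y : Set X) {x : X} {V : ℕ → Set X}
    (hV : (𝓝 x).HasAntitoneBasis V) {δ : ENNReal} {u : ℕ → ENNReal} (hu : ∀ n, u n < δ)
    (hu_lim : Tendsto u atTop (𝓝 δ)) :
    δ ≤ osc g Y x ↔ ∀ n, u n < Metric.ediam (g '' (V n ∩ Y)) := by
  refine ⟨fun h n => (hu n).trans_le (h.trans (osc_le_ediam_image g Y (hV.mem n))), fun h => ?_⟩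
  rw [osc_eq_iInf_mem_nhds]
  refine le_iInf₂ fun s hs => ?_
  obtain ⟨m, hms⟩ := hV.mem_iff.1 hs
  refine le_of_tendsto hu_lim ((eventually_ge_atTop m).mono fun n hmn => ?_)
  exact (h n).le.trans (monotone_ediam_image_inter g Y ((hV.antitone hmn).trans hms))

variable [FirstCountableTopology X] {Ω : Type*} [TopologicalSpace Ω] [MeasurableSpace Ω]
  [OpensMeasurableSpace Ω] {f : Ω → X → ℝ}

theorem upperSemicontinuous_measure_le_osc (hf : Continuous f) (μ : Measure Ω)
    [IsFiniteMeasure μ] (Y : Set X) (δ : ENNReal) :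
    UpperSemicontinuous fun x => μ {ω | δ ≤ osc (f ω) Y x} := by
  obtain rfl | hδ := eq_zero_or_pos δ
  · simpa only [zero_le] using upperSemicontinuous_const
  intro x c hc
  obtain ⟨V, hV⟩ := (𝓝 x).exists_antitone_basis
  obtain ⟨u, hu_mono, hu, hu_lim⟩ := exists_seq_strictMono_tendsto' hδ
  let A : ℕ → Set Ω := fun n => {ω | u n < Metric.ediam (f ω '' (V n ∩ Y))}
  have le_osc_iff : ∀ ω, δ ≤ osc (f ω) Y x ↔ ∀ n, ω ∈ A n := fun ω =>
    le_osc_iff_forall_lt_ediam_image (f ω) Y hV (fun n => (hu n).2) hu_lim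
  have A_anti : Antitone A := fun m n hmn ω hω =>
    ((hu_mono.monotone hmn).trans_lt hω).trans_le
      (monotone_ediam_image_inter (f ω) Y (hV.antitone hmn))
  have A_meas : ∀ n, NullMeasurableSet (A n) μ := fun n =>
    ((lowerSemicontinuous_ediam_image hf _).isOpen_preimage (u n)).nullMeasurableSet
  have A_lim : Tendsto (fun n => μ (A n)) atTop (𝓝 (μ {ω | δ ≤ osc (f ω) Y x})) := by
    simp only [le_osc_iff, ofPred_forall, ofPred_mem_eq]
    exact tendsto_measure_iInter_atTop A_meas A_anti ⟨0, measure_ne_top μ _⟩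
  obtain ⟨n, hn⟩ := (A_lim.eventually_lt_const hc).exists
  filter_upwards [eventually_mem_nhds_iff.2 (hV.mem n)] with y hy
  have le_osc_subset : {ω | δ ≤ osc (f ω) Y y} ⊆ A n := fun ω hω =>
    (hu n).2.trans_le (hω.trans (osc_le_ediam_image (f ω) Y hy))
  exact (measure_mono le_osc_subset).trans_lt hn

theorem isClosed_large_oscillation_general (hf : Continuous f) (μ : Measure Ω)
    [IsFiniteMeasure μ] (Y : Set X) (ε δ : ENNReal) :
    IsClosed {x | ε ≤ μ {ω | δ ≤ osc (f ω) Y x}} :=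
  (upperSemicontinuous_measure_le_osc hf μ Y δ).isClosed_preimage ε

end Oscillation

theorem isClosed_large_oscillation
    {X : Type*} [MetricSpace X]
    (K : Set (X → ℝ)) (hK : IsCompact K)
    [MeasurableSpace K] [BorelSpace K]
    (μ : Measure K) [IsProbabilityMeasure μ] [μ.Regular]
    (ε δ : ℝ) (hε : 0 < ε) (hδ : 0 < δ) :
    IsClosed {x : X |
      ENNReal.ofReal ε ≤ μ {g : K | ENNReal.ofReal δ ≤ osc (g.val : X → ℝ) univ x}} :=
  isClosed_large_oscillation_general continuous_subtype_val μ univ _ _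
end

section
/- Let X be a Borel subset of a Polish space and let K ⊆ CD(X) be a compact space. Then every Radon probability measure μ on K is countably determined. -/
open MeasureTheory Set

/-- A (Radon probability) measure `μ` on a topological space is *countably determined*
if there is a countable family `𝓕` of closed sets such that
`μ U = sup {μ F : F ∈ 𝓕, F ⊆ U}` for every open set `U`. -/
def CountablyDetermined {K : Type*} [TopologicalSpace K] [MeasurableSpace K]
    (μ : Measure K) : Prop :=
  ∃ 𝓕 : Set (Set K), 𝓕.Countable ∧ (∀ F ∈ 𝓕, IsClosed F) ∧
    ∀ U : Set K, IsOpen U → μ U = ⨆ (F : Set K) (_ : F ∈ 𝓕) (_ : F ⊆ U), μ F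

/-!
Call a point `x` exceptional if the functions in `K` discontinuous at `x` form a set of positive
`μ`-measure. An uncountable set of exceptional points would carry an atomless probability measure
`ν`; exchanging the order of integration in `ν.prod μ` then contradicts the fact that each function
in `K` has only countably many discontinuities. So the exceptional points, together with a countable
base of `X`, give a countable family of sets `T` such that, for each `x` and almost every `g`, the
values of `g` on some `T ∋ x` are as close to `g x` as desired. The closed sets
`{g | MapsTo g T C}`, with `C` the closure of a basic open set, then exhaust every subbasic open
set up to a null set; finite intersections and inner regularity extend this to all open sets.
-/

open Filter TopologicalSpace Topology

section LatticeClosure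

variable {α : Type*} {s : Set α}

lemma countable_supClosure [SemilatticeSup α] (hs : s.Countable) : (supClosure s).Countable := by
  have hfinsets : {t : Finset α | ↑t ⊆ s ∧ t.Nonempty}.Countable :=
    ((countable_ofPred_finite_subset hs).preimage Finset.coe_injective).mono
      fun t ht ↦ And.intro t.finite_toSet ht.1
  have := hfinsets.to_subtype
  refine (countable_range fun t : {t : Finset α | ↑t ⊆ s ∧ t.Nonempty} ↦
    t.1.sup' t.2.2 id).mono ?_
  rintro _ ⟨t, ht, hts, rfl⟩
  exact ⟨⟨t, hts, ht⟩, rfl⟩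

lemma countable_infClosure [SemilatticeInf α] (hs : s.Countable) : (infClosure s).Countable :=
  countable_supClosure (α := αᵒᵈ) hs

lemma countable_latticeClosure [DistribLattice α] (hs : s.Countable) :
    (latticeClosure s).Countable := by
  rw [← supClosure_infClosure]
  exact countable_supClosure (countable_infClosure hs)

lemma isClosed_of_mem_latticeClosure [TopologicalSpace α] {𝓕 : Set (Set α)}
    (h𝓕 : ∀ F ∈ 𝓕, IsClosed F) {F : Set α} (hF : F ∈ latticeClosure 𝓕) : IsClosed F :=
  latticeClosure_min (t := {F | IsClosed F}) h𝓕
    ⟨fun _ hF _ hG ↦ IsClosed.union hF hG, fun _ hF _ hG ↦ IsClosed.inter hF hG⟩ hF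

end LatticeClosure

section InnerUnion

variable {α : Type*} {𝓕 𝓖 : Set (Set α)} {U V : Set α}

/-- The union of the members of `𝓕` contained in `U`: the part of `U` that `𝓕` approximates from
inside. Countable determination is proved by showing that it fills each open set up to a null
set. -/
def innerUnion (𝓕 : Set (Set α)) (U : Set α) : Set α :=
  ⋃₀ {F ∈ 𝓕 | F ⊆ U}

lemma innerUnion_mono (h𝓕 : 𝓕 ⊆ 𝓖) (hU : U ⊆ V) : innerUnion 𝓕 U ⊆ innerUnion 𝓖 V :=
  sUnion_mono fun _ hF ↦ ⟨h𝓕 hF.1, hF.2.trans hU⟩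

lemma innerUnion_of_mem (hU : U ∈ 𝓕) : innerUnion 𝓕 U = U :=
  (sUnion_subset fun _ hF ↦ hF.2).antisymm (subset_sUnion_of_mem ⟨hU, Subset.rfl⟩)

lemma inter_innerUnion_subset (h𝓕 : InfClosed 𝓕) :
    innerUnion 𝓕 U ∩ innerUnion 𝓕 V ⊆ innerUnion 𝓕 (U ∩ V) := by
  rintro x ⟨⟨F, ⟨hF, hFU⟩, hxF⟩, ⟨G, ⟨hG, hGV⟩, hxG⟩⟩
  exact ⟨F ∩ G, ⟨h𝓕 hF hG, inter_subset_inter hFU hGV⟩, hxF, hxG⟩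

variable [MeasurableSpace α]

lemma measurableSet_innerUnion (h𝓕 : 𝓕.Countable) (hmeas : ∀ F ∈ 𝓕, MeasurableSet F) :
    MeasurableSet (innerUnion 𝓕 U) :=
  .sUnion (h𝓕.mono fun _ hF ↦ hF.1) fun F hF ↦ hmeas F hF.1

lemma measure_innerUnion (μ : Measure α) (h𝓕 : 𝓕.Countable) (hsup : SupClosed 𝓕) :
    μ (innerUnion 𝓕 U) = ⨆ (F : Set α) (_ : F ∈ 𝓕) (_ : F ⊆ U), μ F := by
  have hdir : DirectedOn (· ⊆ ·) {F ∈ 𝓕 | F ⊆ U} :=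
    SupClosed.directedOn fun F hF G hG ↦ ⟨hsup hF.1 hG.1, union_subset hF.2 hG.2⟩
  rw [innerUnion, sUnion_eq_biUnion,
    measure_biUnion_eq_iSup (h𝓕.mono fun _ hF ↦ hF.1) hdir]
  simp only [mem_ofPred_eq, iSup_and]

end InnerUnion

section CountablyDetermined

variable {K : Type*} [TopologicalSpace K] [MeasurableSpace K] [OpensMeasurableSpace K]
  {μ : Measure K}

lemma sUnion_ae_le_of_isOpen [μ.InnerRegular] {𝓤 : Set (Set K)} {A : Set K}
    (hopen : ∀ U ∈ 𝓤, IsOpen U) (hA : MeasurableSet A) (hle : ∀ U ∈ 𝓤, U ≤ᵐ[μ] A) :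
    ⋃₀ 𝓤 ≤ᵐ[μ] A := by
  have hmeas : MeasurableSet (⋃₀ 𝓤 \ A) := (isOpen_sUnion hopen).measurableSet.diff hA
  rw [ae_le_set, hmeas.measure_eq_iSup_isCompact]
  simp only [ENNReal.iSup_eq_zero]
  intro L hL hLcompact
  -- Each `U ∈ 𝓤` meets `L` in a null set, so `L` is locally null.
  refine hLcompact.measure_zero_of_nhdsWithin fun x hx ↦ ?_
  obtain ⟨U, hU, hxU⟩ := (hL hx).1
  refine ⟨L ∩ U, inter_mem_nhdsWithin L ((hopen U hU).mem_nhds hxU), ?_⟩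
  exact measure_mono_null (fun y hy ↦ And.intro hy.2 (hL hy.1).2) (ae_le_set.1 (hle U hU))

lemma ae_le_innerUnion_of_subbasis [μ.InnerRegular] {𝓢 𝓕 : Set (Set K)}
    (h𝓢 : ‹TopologicalSpace K› = generateFrom 𝓢) (hcount : 𝓕.Countable)
    (hmeas : ∀ F ∈ 𝓕, MeasurableSet F) (huniv : univ ∈ 𝓕) (hinf : InfClosed 𝓕)
    (hle : ∀ U ∈ 𝓢, U ≤ᵐ[μ] innerUnion 𝓕 U) {U : Set K} (hU : IsOpen U) :
    U ≤ᵐ[μ] innerUnion 𝓕 U := by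
  have hopen {V : Set K} (hV : GenerateOpen 𝓢 V) : IsOpen V := by rwa [h𝓢]
  have hgen : GenerateOpen 𝓢 U := by rwa [h𝓢] at hU
  induction hgen with
  | basic V hV => exact hle V hV
  | univ =>
    rw [innerUnion_of_mem huniv]
    exact .rfl
  | inter V W hV hW ihV ihW =>
    exact (ae_le_set_inter (ihV (hopen hV)) (ihW (hopen hW))).trans
      (inter_innerUnion_subset hinf).eventuallyLE
  | sUnion 𝓤 h𝓤 ih =>
    refine sUnion_ae_le_of_isOpen (fun V hV ↦ hopen (h𝓤 V hV))
      (measurableSet_innerUnion hcount hmeas) fun V hV ↦ ?_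
    exact (ih V hV (hopen (h𝓤 V hV))).trans
      (innerUnion_mono Subset.rfl (subset_sUnion_of_mem hV)).eventuallyLE

theorem countablyDetermined_of_subbasis [μ.InnerRegular] {𝓢 𝓕 : Set (Set K)}
    (h𝓢 : ‹TopologicalSpace K› = generateFrom 𝓢) (hcount : 𝓕.Countable)
    (hclosed : ∀ F ∈ 𝓕, IsClosed F) (hle : ∀ U ∈ 𝓢, U ≤ᵐ[μ] innerUnion 𝓕 U) :
    CountablyDetermined μ := by
  set 𝓖 := latticeClosure (insert univ 𝓕)
  have h𝓖 : insert univ 𝓕 ⊆ 𝓖 := subset_latticeClosure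
  have hlattice : IsSublattice 𝓖 := isSublattice_latticeClosure
  have h𝓖count : 𝓖.Countable := countable_latticeClosure (hcount.insert univ)
  have h𝓖closed (F) (hF : F ∈ 𝓖) : IsClosed F :=
    isClosed_of_mem_latticeClosure (forall_mem_insert.2 ⟨isClosed_univ, hclosed⟩) hF
  refine ⟨𝓖, h𝓖count, h𝓖closed, fun U hU ↦ le_antisymm ?_ ?_⟩
  · rw [← measure_innerUnion μ h𝓖count hlattice.supClosed]
    refine measure_mono_ae (ae_le_innerUnion_of_subbasis h𝓢 h𝓖count
      (fun F hF ↦ (h𝓖closed F hF).measurableSet) (h𝓖 (mem_insert _ _)) hlattice.infClosed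
      (fun V hV ↦ (hle V hV).trans ?_) hU)
    exact (innerUnion_mono ((subset_insert _ _).trans h𝓖) Subset.rfl).eventuallyLE
  · exact iSup_le fun F ↦ iSup₂_le fun _ hFU ↦ measure_mono hFU

end CountablyDetermined

section FunctionFamily

variable {X Z K : Type*} [TopologicalSpace Z] [TopologicalSpace K] {φ : K → X → Z}

lemma isClosed_ofPred_mapsTo (hφ : Continuous φ) (T : Set X) {C : Set Z} (hC : IsClosed C) :
    IsClosed {k | MapsTo (φ k) T C} := by
  simp only [MapsTo, ofPred_forall]
  exact isClosed_biInter fun x _ ↦ hC.preimage ((continuous_apply x).comp hφ)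

lemma eq_generateFrom_eval_preimage (hφ : IsInducing φ) :
    ‹TopologicalSpace K› = generateFrom {U | ∃ x V, IsOpen V ∧ (φ · x) ⁻¹' V = U} := by
  have hset : {U | ∃ x V, IsOpen V ∧ (φ · x) ⁻¹' V = U} =
      ⋃ x, {U | IsOpen[induced (φ · x) inferInstance] U} := by
    ext U
    simp only [isOpen_induced_iff, mem_ofPred_eq, mem_iUnion]
  rw [hset, hφ.eq_induced]
  refine Eq.trans ?_ (generateFrom_iUnion_isOpen fun x ↦ induced (φ · x) inferInstance).symm
  rw [Pi.topologicalSpace, induced_iInf]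
  simp only [induced_compose, Function.comp_def]

theorem countablyDetermined_of_ae_mapsTo [SecondCountableTopology Z] [RegularSpace Z]
    [MeasurableSpace K] [OpensMeasurableSpace K] {μ : Measure K} [μ.InnerRegular]
    (hφ : IsInducing φ) {𝓣 : Set (Set X)} (h𝓣 : 𝓣.Countable)
    (hmaps : ∀ x, ∀ᵐ k ∂μ, ∀ V ∈ 𝓝 (φ k x), ∃ T ∈ 𝓣, x ∈ T ∧ MapsTo (φ k) T V) :
    CountablyDetermined μ := by
  have hB : IsTopologicalBasis (countableBasis Z) := isBasis_countableBasis Z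
  refine countablyDetermined_of_subbasis (eq_generateFrom_eval_preimage hφ)
    (𝓕 := image2 (fun T W ↦ {k | MapsTo (φ k) T (closure W)}) 𝓣 (countableBasis Z))
    (h𝓣.image2 (countable_countableBasis Z) _) ?_ ?_
  · rintro _ ⟨T, -, W, -, rfl⟩
    exact isClosed_ofPred_mapsTo hφ.continuous T isClosed_closure
  · rintro _ ⟨x, V, hV, rfl⟩
    filter_upwards [hmaps x] with k hk hkV
    obtain ⟨W, hW, hkW, hWV⟩ := hB.exists_closure_subset (hV.mem_nhds hkV)
    obtain ⟨T, hT, hxT, hkT⟩ := hk W ((hB.isOpen hW).mem_nhds hkW)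
    exact ⟨_, ⟨⟨T, hT, W, hW, rfl⟩, fun l hl ↦ hWV (hl hxT)⟩, hkT.mono_right subset_closure⟩

end FunctionFamily

section Discontinuities

variable {X Z K : Type*} [TopologicalSpace X] [SecondCountableTopology X] [TopologicalSpace Z]
  [MeasurableSpace K] {φ : K → X → Z} {μ : Measure K}

lemma exists_countable_ae_mapsTo (hφ : {x | ¬ ∀ᵐ k ∂μ, ContinuousAt (φ k) x}.Countable) :
    ∃ 𝓣 : Set (Set X), 𝓣.Countable ∧
      ∀ x, ∀ᵐ k ∂μ, ∀ V ∈ 𝓝 (φ k x), ∃ T ∈ 𝓣, x ∈ T ∧ MapsTo (φ k) T V := by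
  refine ⟨countableBasis X ∪ singleton '' {x | ¬ ∀ᵐ k ∂μ, ContinuousAt (φ k) x},
    (countable_countableBasis X).union (hφ.image _), fun x ↦ ?_⟩
  by_cases hx : ∀ᵐ k ∂μ, ContinuousAt (φ k) x
  · filter_upwards [hx] with k hk V hV
    obtain ⟨T, hT, hxT, hTV⟩ := (isBasis_countableBasis X).mem_nhds_iff.1 (hk hV)
    exact ⟨T, .inl hT, hxT, hTV⟩
  · refine .of_forall fun k V hV ↦ ⟨{x}, .inr ⟨x, hx, rfl⟩, rfl, ?_⟩
    exact mapsTo_singleton.2 (mem_of_mem_nhds hV)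

lemma measurableSet_ofPred_continuousAt [MeasurableSpace X] [OpensMeasurableSpace X]
    [PseudoMetrizableSpace Z] [TopologicalSpace K] [OpensMeasurableSpace K] (hφ : Continuous φ) :
    MeasurableSet {p : X × K | ContinuousAt (φ p.2) p.1} := by
  let := pseudoMetrizableSpaceUniformity Z
  have := pseudoMetrizableSpaceUniformity_countably_generated Z
  obtain ⟨E, hEclosed, hE⟩ := (uniformity_hasBasis_closed (α := Z)).exists_antitone_subbasis
  have hcont (x : X) (k : K) : ContinuousAt (φ k) x ↔ ∀ n, ∃ V ∈ countableBasis X, x ∈ V ∧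
      ∀ y ∈ V, ∀ z ∈ V, (φ k y, φ k z) ∈ E n := by
    rw [Uniform.continuousAt_iff_prod, nhds_prod_eq,
      (isBasis_countableBasis X).nhds_hasBasis.prod_self.tendsto_iff hE.toHasBasis]
    simp only [and_assoc, true_imp_iff, forall_prod_set, id_eq]
  have hset : {p : X × K | ContinuousAt (φ p.2) p.1} = ⋂ n, ⋃ V ∈ countableBasis X,
      V ×ˢ {k | ∀ y ∈ V, ∀ z ∈ V, (φ k y, φ k z) ∈ E n} := by
    ext ⟨x, k⟩
    simp only [hcont, mem_ofPred_eq, mem_iInter, mem_iUnion, mem_prod, exists_prop]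
  have hclosed (V : Set X) (n : ℕ) : IsClosed {k | ∀ y ∈ V, ∀ z ∈ V, (φ k y, φ k z) ∈ E n} := by
    simp only [ofPred_forall]
    exact isClosed_biInter fun y _ ↦ isClosed_biInter fun z _ ↦ (hEclosed n).2.preimage
      (((continuous_apply y).comp hφ).prodMk ((continuous_apply z).comp hφ))
  rw [hset]
  exact .iInter fun n ↦ .biUnion (countable_countableBasis X) fun V hV ↦
    (isOpen_of_mem_countableBasis hV).measurableSet.prod (hclosed V n).measurableSet

end Discontinuities

section Fubini

variable {X K : Type*} [MeasurableSpace X] [StandardBorelSpace X] [MeasurableSpace K]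

lemma exists_isProbabilityMeasure_nullSingletonClass {S : Set X} (hS : MeasurableSet S)
    (hcount : ¬ S.Countable) :
    ∃ ν : Measure X, IsProbabilityMeasure ν ∧ NullSingletonClass ν ∧ ∀ᵐ x ∂ν, x ∈ S := by
  have := hS.standardBorel
  let e : unitInterval ≃ᵐ S := PolishSpace.measurableEquivOfNotCountable
    (fun h ↦ zero_lt_one.not_ge (Cardinal.Real.Icc_countable_iff.1 h)) hcount
  have he : Measurable fun t ↦ (e t : X) := measurable_subtype_coe.comp e.measurable
  refine ⟨volume.map fun t ↦ (e t : X), Measure.isProbabilityMeasure_map he.aemeasurable,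
    ⟨fun x ↦ ?_⟩, (ae_map_iff he.aemeasurable hS).2 (.of_forall fun t ↦ (e t).2)⟩
  rw [Measure.map_apply he (measurableSet_singleton x)]
  exact (subsingleton_singleton.preimage
    (Subtype.val_injective.comp e.injective)).measure_zero _

lemma countable_not_ae_of_ae_countable {μ : Measure K} [SFinite μ] {p : X → K → Prop}
    (hp : MeasurableSet {q : X × K | p q.1 q.2}) (hcount : ∀ᵐ k ∂μ, {x | ¬ p x k}.Countable) :
    {x | ¬ ∀ᵐ k ∂μ, p x k}.Countable := by
  by_contra hS
  have hSmeas : MeasurableSet {x | ¬ ∀ᵐ k ∂μ, p x k} :=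
    (measurable_measure_prodMk_left (ν := μ) hp.compl) (measurableSet_singleton 0).compl
  obtain ⟨ν, _, _, hν⟩ := exists_isProbabilityMeasure_nullSingletonClass hSmeas hS
  have hae : ∀ᵐ x ∂ν, ∀ᵐ k ∂μ, p x k :=
    (Measure.ae_ae_comm hp).2 (hcount.mono fun k hk ↦ hk.measure_zero ν)
  obtain ⟨x, hx, hx'⟩ := (hν.and hae).exists
  exact hx hx'

end Fubini

theorem countablyDetermined_of_CD_general
    {X Z K : Type*} [TopologicalSpace X] [SecondCountableTopology X] [MeasurableSpace X]
    [OpensMeasurableSpace X] [StandardBorelSpace X]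
    [TopologicalSpace Z] [PseudoMetrizableSpace Z] [SecondCountableTopology Z]
    [TopologicalSpace K] [MeasurableSpace K] [OpensMeasurableSpace K]
    {φ : K → X → Z} (hφ : IsInducing φ)
    (μ : Measure K) [SFinite μ] [μ.InnerRegular]
    (hCD : ∀ᵐ k ∂μ, {x | ¬ ContinuousAt (φ k) x}.Countable) :
    CountablyDetermined μ := by
  have hexc : {x | ¬ ∀ᵐ k ∂μ, ContinuousAt (φ k) x}.Countable :=
    countable_not_ae_of_ae_countable (measurableSet_ofPred_continuousAt hφ.continuous) hCD
  obtain ⟨𝓣, h𝓣, hmaps⟩ := exists_countable_ae_mapsTo hexc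
  exact countablyDetermined_of_ae_mapsTo hφ h𝓣 hmaps

theorem countablyDetermined_of_CD
    {Y : Type*} [TopologicalSpace Y] [PolishSpace Y] [MeasurableSpace Y] [BorelSpace Y]
    (X : Set Y) (hX : MeasurableSet X)
    (K : Set (X → ℝ)) (hK : IsCompact K)
    (hCD : ∀ g ∈ K, {x : X | ¬ ContinuousAt g x}.Countable)
    [MeasurableSpace K] [BorelSpace K]
    (μ : Measure K) [IsProbabilityMeasure μ] [μ.Regular] :
    CountablyDetermined μ := by
  have := hX.standardBorel
  exact countablyDetermined_of_CD_general (φ := Subtype.val) .subtypeVal μ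
    (.of_forall fun g ↦ hCD g g.2)
end
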